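/- Suppose every 5-edge-connected graph admits a mod 3-orientation. Then every 5-edge-connected graph G with a vertex x of degree 5 has the property that every pre-orientation D_0 of the edges incident with x satisfying d^+_{D_0}(x) ≡ d^-_{D_0}(x) (mod 3) extends to a mod 3-orientation of G. -/

import Mathlib

open Finset

/-- A finite multigraph without loops: each edge `e` has two distinct
endpoints `fst e` and `snd e`.  An orientation is a map `D : E → Bool`,
where `D e = true` means `e` is directed from `fst e` to `snd e`. -/
structure Multigraph (V : Type) (E : Type) where
  fst : E → V
  snd : E → V
  no_loop : ∀ e, fst e ≠ snd e

namespace Multigraph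

variable {V E : Type} [Fintype V] [DecidableEq V] [Fintype E] [DecidableEq E]

/-- The tail (initial vertex) of edge `e` under orientation `D`. -/
def tail (G : Multigraph V E) (D : E → Bool) (e : E) : V :=
  if D e then G.fst e else G.snd e

/-- The head (terminal vertex) of edge `e` under orientation `D`. -/
def head (G : Multigraph V E) (D : E → Bool) (e : E) : V :=
  if D e then G.snd e else G.fst e

/-- Outdegree `d⁺_D(v)` (as an integer, for convenience). -/
def outDeg (G : Multigraph V E) (D : E → Bool) (v : V) : ℤ :=
  ((univ.filter fun e => G.tail D e = v).card : ℤ)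

/-- Indegree `d⁻_D(v)`. -/
def inDeg (G : Multigraph V E) (D : E → Bool) (v : V) : ℤ :=
  ((univ.filter fun e => G.head D e = v).card : ℤ)

/-- `e` is incident with `v`. -/
def Incident (G : Multigraph V E) (v : V) (e : E) : Prop :=
  G.fst e = v ∨ G.snd e = v

instance (G : Multigraph V E) (v : V) : DecidablePred (G.Incident v) := fun e =>
  inferInstanceAs (Decidable (G.fst e = v ∨ G.snd e = v))

/-- The degree of a vertex. -/
def degree (G : Multigraph V E) (v : V) : ℕ :=
  (univ.filter fun e => G.Incident v e).card

/-- The edge-cut `∂_G(A)`: edges with exactly one endpoint in `A`. -/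
def cut (G : Multigraph V E) (A : Finset V) : Finset E :=
  univ.filter fun e => ¬ ((G.fst e ∈ A) ↔ (G.snd e ∈ A))

/-- `G` is `k`-edge-connected: every edge-cut has at least `k` edges. -/
def EdgeConnected (G : Multigraph V E) (k : ℕ) : Prop :=
  ∀ A : Finset V, A.Nonempty → A ≠ univ → k ≤ (G.cut A).card

/-- A boundary function: values in `ℤ₃` summing to `0`. -/
def IsBoundary (β : V → ZMod 3) : Prop := ∑ v, β v = 0

/-- `D` is a `β`-orientation: `d⁺(v) - d⁻(v) ≡ β v (mod 3)` at every vertex. -/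
def IsBetaOrientation (G : Multigraph V E) (β : V → ZMod 3) (D : E → Bool) : Prop :=
  ∀ v : V, ((G.outDeg D v - G.inDeg D v : ℤ) : ZMod 3) = β v

/-- A mod 3-orientation: `d⁺(v) ≡ d⁻(v) (mod 3)` at every vertex. -/
def IsMod3Orientation (G : Multigraph V E) (D : E → Bool) : Prop :=
  ∀ v : V, ((G.outDeg D v - G.inDeg D v : ℤ) : ZMod 3) = 0

/-- `G` admits a mod 3-orientation (equivalently, a nowhere-zero 3-flow). -/
def Mod3Orientable (G : Multigraph V E) : Prop := ∃ D, G.IsMod3Orientation D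

/-- `G` is `ℤ₃`-connected. -/
def Z3Connected (G : Multigraph V E) : Prop :=
  ∀ β : V → ZMod 3, IsBoundary β → ∃ D, G.IsBetaOrientation β D

/-- `G` is `ℤ₃`-extendable at `x`: every pre-orientation of the edges at `x`
compatible with `β x` extends to a `β`-orientation of `G`. -/
def Z3ExtendableAt (G : Multigraph V E) (x : V) : Prop :=
  ∀ β : V → ZMod 3, IsBoundary β →
    ∀ D₀ : E → Bool, ((G.outDeg D₀ x - G.inDeg D₀ x : ℤ) : ZMod 3) = β x →
      ∃ D : E → Bool, (∀ e, G.Incident x e → D e = D₀ e) ∧ G.IsBetaOrientation β D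

/-- `G` is mod-3-extendable at `x`: every pre-orientation of `∂(x)` with
`d⁺(x) ≡ d⁻(x) (mod 3)` extends to a mod 3-orientation of `G`. -/
def Mod3ExtendableAt (G : Multigraph V E) (x : V) : Prop :=
  ∀ D₀ : E → Bool, ((G.outDeg D₀ x - G.inDeg D₀ x : ℤ) : ZMod 3) = 0 →
    ∃ D : E → Bool, (∀ e, G.Incident x e → D e = D₀ e) ∧ G.IsMod3Orientation D

/-- `A` is a `k`-critical-set: `d(A) ≤ k` but every nonempty proper subset has
larger boundary. -/
def CriticalSet (G : Multigraph V E) (k : ℕ) (A : Finset V) : Prop :=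
  A.Nonempty ∧ A ≠ univ ∧ (G.cut A).card ≤ k ∧
    ∀ B : Finset V, B.Nonempty → B ⊂ A → k < (G.cut B).card

/-- The set of edge-cuts of size exactly `k` (as sets of edges). -/
def kCuts (G : Multigraph V E) (k : ℕ) : Finset (Finset E) :=
  ((univ : Finset (Finset V)).filter
    fun A => A.Nonempty ∧ A ≠ univ ∧ (G.cut A).card = k).image G.cut



/-- `±1` value of a Boolean. -/
def pm (b : Bool) : ℤ := if b then 1 else -1

/-- Contribution of an edge to the net outdegree. -/
def contrib (G : Multigraph V E) (D : E → Bool) (v : V) (e : E) : ℤ :=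
  (if G.tail D e = v then 1 else 0) - (if G.head D e = v then 1 else 0)

lemma net_eq (G : Multigraph V E) (D : E → Bool) (v : V) :
    G.outDeg D v - G.inDeg D v = ∑ e, G.contrib D v e := by
  simp only [outDeg, inDeg, contrib, Finset.sum_sub_distrib, Finset.card_filter]
  push_cast
  rfl

lemma net_sum (G : Multigraph V E) (D : E → Bool) :
    ∑ v, (G.outDeg D v - G.inDeg D v) = 0 := by
  simp only [net_eq]
  rw [Finset.sum_comm]
  apply Finset.sum_eq_zero
  intro e _
  simp [contrib, Finset.sum_sub_distrib]

lemma contrib_not (G : Multigraph V E) (D : E → Bool) (v : V) (e : E) :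
    G.contrib (fun e => !D e) v e = - G.contrib D v e := by
  unfold contrib tail head
  cases h : D e <;> simp [h]

/-- The edge points towards `x`. -/
def sgn (G : Multigraph V E) (x : V) (D : E → Bool) (e : E) : Bool :=
  if G.fst e = x then !D e else D e

lemma net_x (G : Multigraph V E) (x : V) (D : E → Bool)
    (σ : Fin 5 ≃ {e // G.Incident x e}) :
    G.outDeg D x - G.inDeg D x = - ∑ j, pm (G.sgn x D (σ j).1) := by
  rw [net_eq, ← Finset.sum_neg_distrib]
  symm
  apply Fintype.sum_of_injective (fun j => (σ j).1)
  · exact Subtype.val_injective.comp σ.injective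
  · intro e he
    have hn : ¬ G.Incident x e := fun h => he ⟨σ.symm ⟨e, h⟩, by simp⟩
    simp only [Incident, not_or] at hn
    unfold contrib tail head
    cases h : D e <;> simp [hn.1, hn.2]
  · intro j
    have hi := (σ j).2
    have hl := G.no_loop (σ j).1
    generalize (σ j).1 = e at *
    unfold contrib tail head sgn pm
    rcases hi with hi | hi
    · have : G.snd e ≠ x := fun h => hl (hi.trans h.symm)
      cases h : D e <;> simp [hi, this]
    · have : G.fst e ≠ x := fun h => hl (h.trans hi.symm)
      cases h : D e <;> simp [hi, this]

lemma odd_one : ∀ s : Fin 5 → Bool, ((-∑ j, pm (s j) : ℤ) : ZMod 3) = 0 →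
    ∃ j, ∀ k, k ≠ j → s k = !s j := by
  have key : ∀ s : Fin 5 → Bool, (3 : ℤ) ∣ (-∑ j, pm (s j)) →
    ∃ j, ∀ k, k ≠ j → s k = !s j := by decide
  intro s hs
  exact key s ((ZMod.intCast_zmod_eq_zero_iff_dvd _ 3).1 hs)

lemma diag_or : ∀ (i : Fin 5) (s : Fin 5 → Bool), (3 : ℤ) ∣ (-∑ j, pm (s j)) →
    (∀ k, k ≠ i → s k = !s i) ∨ ∑ j, pm (s j) = 3 * pm (s i) := by
  decide

/-- The parity argument: a tournament on six vertices. -/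
lemma tournament (t : Fin 5 → Fin 5 → Bool) (ha : ∀ i j, i ≠ j → t i j = !t j i)
    (hs : ∀ i, ((-∑ j, pm (t i j) : ℤ) : ZMod 3) = 0) :
    ∃ i, ∀ j, j ≠ i → t i j = !t i i := by
  by_contra hcon
  push Not at hcon
  have h3 : ∀ i, ∑ j, pm (t i j) = 3 * pm (t i i) := by
    intro i
    rcases diag_or i (t i) ((ZMod.intCast_zmod_eq_zero_iff_dvd _ 3).1 (hs i)) with h | h
    · obtain ⟨j, hj, hne⟩ := hcon i
      exact absurd (h j hj) hne
    · exact h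
  have hanti : ∀ i j, i ≠ j → pm (t i j) = - pm (t j i) := by
    intro i j hij
    rw [ha i j hij]
    cases t j i <;> rfl
  have hd : ∀ i, pm (t i i) = 1 ∨ pm (t i i) = -1 := by
    intro i
    cases t i i <;> simp [pm]
  have e0 := h3 0
  have e1 := h3 1
  have e2 := h3 2
  have e3 := h3 3
  have e4 := h3 4
  simp only [Fin.sum_univ_five] at e0 e1 e2 e3 e4
  have a01 := hanti 0 1 (by decide)
  have a02 := hanti 0 2 (by decide)
  have a03 := hanti 0 3 (by decide)
  have a04 := hanti 0 4 (by decide)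
  have a12 := hanti 1 2 (by decide)
  have a13 := hanti 1 3 (by decide)
  have a14 := hanti 1 4 (by decide)
  have a23 := hanti 2 3 (by decide)
  have a24 := hanti 2 4 (by decide)
  have a34 := hanti 3 4 (by decide)
  have d0 := hd 0
  have d1 := hd 1
  have d2 := hd 2
  have d3 := hd 3
  have d4 := hd 4
  omega

section Construction

/-- The end of `e` different from `x`. -/
def oth (G : Multigraph V E) (x : V) (e : E) : {v : V // v ≠ x} :=
  if h : G.fst e = x then ⟨G.snd e, fun h' => G.no_loop e (h.trans h'.symm)⟩
  else ⟨G.fst e, h⟩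

/-- Edges of `K₅` together with five spokes (the diagonal). -/
abbrev KE : Type := {p : Fin 5 × Fin 5 // p.1 ≤ p.2}

/-- The edge between copies `i` and `j`. -/
def ke (i j : Fin 5) : KE :=
  if h : i ≤ j then ⟨(i, j), h⟩ else ⟨(j, i), (not_le.1 h).le⟩

/-- Vertices of the big graph. -/
abbrev BV (V : Type) (x : V) : Type := Option (Fin 5 × {v : V // v ≠ x})

/-- Edges of the big graph. -/
abbrev BE (G : Multigraph V E) (x : V) : Type := (Fin 5 × {e : E // ¬ G.Incident x e}) ⊕ KE

/-- `K₆` with five vertices replaced by copies of `G - x`. -/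
def big (G : Multigraph V E) (x : V) (σ : Fin 5 → (Fin 5 ≃ {e // G.Incident x e})) :
    Multigraph (BV V x) (BE G x) where
  fst := fun e => match e with
    | .inl q => some (q.1, ⟨G.fst q.2.1, fun h => q.2.2 (Or.inl h)⟩)
    | .inr p => some (p.1.1, G.oth x (σ p.1.1 p.1.2).1)
  snd := fun e => match e with
    | .inl q => some (q.1, ⟨G.snd q.2.1, fun h => q.2.2 (Or.inr h)⟩)
    | .inr p => if p.1.1 = p.1.2 then none else some (p.1.2, G.oth x (σ p.1.2 p.1.1).1)
  no_loop := by
    rintro (q | p)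
    · simp [G.no_loop]
    · dsimp only
      split_ifs with h
      · simp
      · simp [h]

/-- Embedding of the edges of `G` as edges of copy `i`. -/
def emb (G : Multigraph V E) (x : V) (σ : Fin 5 → (Fin 5 ≃ {e // G.Incident x e}))
    (i : Fin 5) (e : E) : BE G x :=
  if h : G.Incident x e then .inr (ke i ((σ i).symm ⟨e, h⟩)) else .inl (i, ⟨e, h⟩)

lemma ke_inj : ∀ i j k : Fin 5, ke i j = ke i k → j = k := by decide

lemma ke_surj : ∀ p : KE, ke p.1.1 p.1.2 = p ∧ ke p.1.2 p.1.1 = p := by decide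

lemma emb_inj (G : Multigraph V E) (x : V) (σ : Fin 5 → (Fin 5 ≃ {e // G.Incident x e}))
    (i : Fin 5) : Function.Injective (emb G x σ i) := by
  intro e f h
  unfold emb at h
  split_ifs at h with h1 h2 h2
  · have := ke_inj _ _ _ (Sum.inr_injective h)
    simpa using this
  · simpa using h

lemma emb_inc (G : Multigraph V E) (x : V) (σ : Fin 5 → (Fin 5 ≃ {e // G.Incident x e}))
    (i j : Fin 5) : emb G x σ i (σ i j).1 = .inr (ke i j) := by
  unfold emb
  rw [dif_pos (σ i j).2]
  simp

/-- Vertices of copy `i`. -/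
def Q (x : V) (i : Fin 5) : Finset (BV V x) :=
  univ.filter fun a => ∃ v, a = some (i, v)

lemma mem_Q (x : V) (i : Fin 5) (a : BV V x) : a ∈ Q x i ↔ ∃ v, a = some (i, v) := by
  simp [Q]

lemma cut_union_le (G : Multigraph V E) (A B : Finset V) :
    (G.cut (A ∪ B)).card + (G.cut (A ∩ B)).card ≤ (G.cut A).card + (G.cut B).card := by
  simp only [cut, Finset.card_filter, ← Finset.sum_add_distrib]
  apply Finset.sum_le_sum
  intro e _
  simp only [Finset.mem_union, Finset.mem_inter]
  by_cases h1 : G.fst e ∈ A <;> by_cases h2 : G.fst e ∈ B <;> by_cases h3 : G.snd e ∈ A <;>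
    by_cases h4 : G.snd e ∈ B <;> simp [h1, h2, h3, h4]

lemma cut_compl (G : Multigraph V E) (A : Finset V) : G.cut Aᶜ = G.cut A := by
  ext e
  simp only [cut, Finset.mem_filter, Finset.mem_compl]
  tauto

/-- Endpoints of an edge `ke i j`: one is in copy `i`, the other is not. -/
lemma ke_ends (G : Multigraph V E) (x : V) (σ : Fin 5 → (Fin 5 ≃ {e // G.Incident x e}))
    (i j : Fin 5) :
    (i ≤ j ∧ (big G x σ).fst (.inr (ke i j)) = some (i, G.oth x (σ i j).1) ∧
      ∀ v, (big G x σ).snd (.inr (ke i j)) ≠ some (i, v)) ∨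
    (¬ i ≤ j ∧ (big G x σ).snd (.inr (ke i j)) = some (i, G.oth x (σ i j).1) ∧
      ∀ v, (big G x σ).fst (.inr (ke i j)) ≠ some (i, v)) := by
  by_cases h : i ≤ j
  · left
    refine ⟨h, ?_, ?_⟩
    · simp [big, ke, h]
    · intro v
      simp only [big, ke, h, dif_pos]
      split_ifs with h'
      · simp
      · simp [Ne.symm h']
  · right
    have hne : j ≠ i := fun h' => h h'.ge
    refine ⟨h, ?_, ?_⟩
    · simp [big, ke, h, hne]
    · intro v
      simp [big, ke, h, hne]

lemma cut_small (G : Multigraph V E) (x : V) (σ : Fin 5 → (Fin 5 ≃ {e // G.Incident x e}))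
    (h5 : G.EdgeConnected 5) (i : Fin 5) (B : Finset (BV V x)) (hB : B.Nonempty)
    (hBQ : B ⊆ Q x i) : 5 ≤ ((big G x σ).cut B).card := by
  set S : Finset V := univ.filter fun v => ∃ h : v ≠ x, some (i, ⟨v, h⟩) ∈ B with hS
  have hmem : ∀ w : {v : V // v ≠ x}, w.1 ∈ S ↔ some (i, w) ∈ B := by
    intro w
    simp [hS, w.2]
  have hxS : x ∉ S := by simp [hS]
  have hSn : S.Nonempty := by
    obtain ⟨b, hb⟩ := hB
    obtain ⟨v, rfl⟩ := (mem_Q x i b).1 (hBQ hb)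
    exact ⟨v.1, (hmem v).2 hb⟩
  have hSu : S ≠ univ := fun h => hxS (h ▸ Finset.mem_univ x)
  refine (h5 S hSn hSu).trans ?_
  apply Finset.card_le_card_of_injOn (emb G x σ i)
  · intro e he
    simp only [cut, Finset.coe_filter, Finset.mem_univ, true_and, Set.mem_ofPred_eq] at he ⊢
    by_cases hinc : G.Incident x e
    · obtain ⟨j, hj⟩ : ∃ j, σ i j = ⟨e, hinc⟩ := (σ i).surjective _
      have hemb := emb_inc G x σ i j
      have hoS : some (i, G.oth x e) ∈ B := by
        rw [← hmem]
        unfold oth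
        split_ifs with hf
        · rw [hf] at he
          tauto
        · have hs : G.snd e = x := hinc.resolve_left hf
          rw [hs] at he
          tauto
      have hout : ∀ a, (∀ v, a ≠ some (i, v)) → a ∉ B := by
        intro a ha haB
        obtain ⟨v, hv⟩ := (mem_Q x i a).1 (hBQ haB)
        exact ha v hv
      rw [hj] at hemb
      simp only at hemb
      rw [hemb]
      rcases ke_ends G x σ i j with ⟨_, h1, h2⟩ | ⟨_, h1, h2⟩
      · rw [hj] at h1
        rw [h1]
        have := hout _ h2
        tauto
      · rw [hj] at h1
        rw [h1]
        have := hout _ h2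
        tauto
    · have : emb G x σ i e = .inl (i, ⟨e, hinc⟩) := by simp [emb, hinc]
      rw [this]
      simp only [big]
      rw [← hmem, ← hmem]
      exact he
  · exact (emb_inj G x σ i).injOn

lemma cut_Q (G : Multigraph V E) (x : V) (σ : Fin 5 → (Fin 5 ≃ {e // G.Incident x e}))
    (i : Fin 5) : ((big G x σ).cut (Q x i)).card ≤ 5 := by
  have hsub : (big G x σ).cut (Q x i) ⊆
      (univ : Finset (Fin 5)).image (fun j => (.inr (ke i j) : BE G x)) := by
    rintro (q | p) he
    · exfalso
      have h1 := q.2.2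
      simp only [Incident, not_or] at h1
      simp [cut, big, mem_Q, h1.1, h1.2] at he
    · simp only [Finset.mem_image, Finset.mem_univ, true_and]
      by_cases h1 : p.1.1 = i
      · exact ⟨p.1.2, by rw [← h1, (ke_surj p).1]⟩
      · by_cases h2 : p.1.2 = i
        · exact ⟨p.1.1, by rw [← h2, (ke_surj p).2]⟩
        · exfalso
          simp only [cut, big, mem_Q, Finset.mem_filter] at he
          apply he.2
          split_ifs <;> simp [h1, h2]
  exact (Finset.card_le_card hsub).trans (Finset.card_image_le.trans (by simp))

lemma k6_cut : ∀ I : Finset (Fin 5), I.Nonempty →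
    5 ≤ ((univ : Finset KE).filter fun p =>
      ¬ (p.1.1 ∈ I ↔ (p.1.1 ≠ p.1.2 ∧ p.1.2 ∈ I))).card := by
  decide

lemma cut_blocks (G : Multigraph V E) (x : V) (σ : Fin 5 → (Fin 5 ≃ {e // G.Incident x e}))
    (I : Finset (Fin 5)) (hI : I.Nonempty) :
    5 ≤ ((big G x σ).cut (I.biUnion (Q x))).card := by
  refine (k6_cut I hI).trans ?_
  apply Finset.card_le_card_of_injOn (fun p => (.inr p : BE G x))
  · intro p hp
    simp only [cut, big, mem_Q, Finset.coe_filter, Finset.mem_univ, true_and,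
      Set.mem_ofPred_eq, Finset.mem_biUnion] at hp ⊢
    intro hh
    apply hp
    by_cases h : p.1.1 = p.1.2
    · simpa [h] using hh
    · simpa [h] using hh
  · exact Sum.inr_injective.injOn

lemma cut_fill (G : Multigraph V E) (x : V) (σ : Fin 5 → (Fin 5 ≃ {e // G.Incident x e}))
    (h5 : G.EdgeConnected 5) (A : Finset (BV V x)) (I : Finset (Fin 5)) :
    (∀ i ∈ I, (A ∩ Q x i).Nonempty) →
    ((big G x σ).cut (A ∪ I.biUnion (Q x))).card ≤ ((big G x σ).cut A).card := by
  induction I using Finset.induction_on with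
  | empty => intro _; simp
  | insert i I hi ih =>
    intro h
    have ih' := ih fun k hk => h k (Finset.mem_insert_of_mem hk)
    have hsm := cut_union_le (big G x σ) (A ∪ I.biUnion (Q x)) (Q x i)
    have h1 := cut_Q G x σ i
    have h2 := cut_small G x σ h5 i ((A ∪ I.biUnion (Q x)) ∩ Q x i)
      ((h i (Finset.mem_insert_self _ _)).mono
        (Finset.inter_subset_inter_right Finset.subset_union_left))
      Finset.inter_subset_right
    have h3 : A ∪ (insert i I).biUnion (Q x) = (A ∪ I.biUnion (Q x)) ∪ Q x i := by
      rw [Finset.biUnion_insert, Finset.union_assoc, Finset.union_comm (Q x i)]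
    rw [h3]
    omega

lemma big_conn_aux (G : Multigraph V E) (x : V)
    (σ : Fin 5 → (Fin 5 ≃ {e // G.Incident x e}))
    (h5 : G.EdgeConnected 5) (A : Finset (BV V x)) (hA : A.Nonempty) (hn : none ∉ A) :
    5 ≤ ((big G x σ).cut A).card := by
  set I : Finset (Fin 5) := univ.filter fun i => (A ∩ Q x i).Nonempty with hI
  have hsub : A ⊆ I.biUnion (Q x) := by
    intro a ha
    rcases a with _ | ⟨i, v⟩
    · exact absurd ha hn
    · have hq : some (i, v) ∈ Q x i := (mem_Q x i _).2 ⟨v, rfl⟩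
      have hiI : i ∈ I :=
        Finset.mem_filter.2 ⟨Finset.mem_univ _, _, Finset.mem_inter.2 ⟨ha, hq⟩⟩
      exact Finset.mem_biUnion.2 ⟨i, hiI, hq⟩
  have hIn : I.Nonempty := by
    obtain ⟨a, ha⟩ := hA
    obtain ⟨i, hi, _⟩ := Finset.mem_biUnion.1 (hsub ha)
    exact ⟨i, hi⟩
  have h1 := cut_fill G x σ h5 A I (fun i hi => (Finset.mem_filter.1 hi).2)
  rw [Finset.union_eq_right.2 hsub] at h1
  exact (cut_blocks G x σ I hIn).trans h1

lemma big_conn (G : Multigraph V E) (x : V) (σ : Fin 5 → (Fin 5 ≃ {e // G.Incident x e}))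
    (h5 : G.EdgeConnected 5) : (big G x σ).EdgeConnected 5 := by
  intro A hA hu
  by_cases hn : none ∈ A
  · rw [← cut_compl]
    apply big_conn_aux G x σ h5
    · rw [Finset.nonempty_iff_ne_empty]
      intro h
      exact hu ((Finset.compl_eq_empty_iff _).1 h)
    · simpa using hn
  · exact big_conn_aux G x σ h5 A hA hn

/-- Edge between copies `i` and `j` leaves copy `i`. -/
def leave (G : Multigraph V E) (x : V) (D : BE G x → Bool) (i j : Fin 5) : Bool :=
  if i ≤ j then D (.inr (ke i j)) else !D (.inr (ke i j))

lemma ke_comm : ∀ i j : Fin 5, ke i j = ke j i := by decide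

lemma leave_anti (G : Multigraph V E) (x : V) (D : BE G x → Bool) (i j : Fin 5) (h : i ≠ j) :
    leave G x D i j = !leave G x D j i := by
  unfold leave
  rw [ke_comm j i]
  rcases lt_or_gt_of_ne h with h | h
  · simp [h.le, not_le.2 h]
  · simp [h.le, not_le.2 h]

/-- Orientation of `G` induced by copy `i`. -/
def pull (G : Multigraph V E) (x : V) (σ : Fin 5 → (Fin 5 ≃ {e // G.Incident x e}))
    (D : BE G x → Bool) (i : Fin 5) (e : E) : Bool :=
  if h : G.Incident x e then
    (if G.fst e = x then !leave G x D i ((σ i).symm ⟨e, h⟩)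
      else leave G x D i ((σ i).symm ⟨e, h⟩))
  else D (.inl (i, ⟨e, h⟩))

lemma sgn_pull (G : Multigraph V E) (x : V) (σ : Fin 5 → (Fin 5 ≃ {e // G.Incident x e}))
    (D : BE G x → Bool) (i j : Fin 5) :
    G.sgn x (pull G x σ D i) (σ i j).1 = leave G x D i j := by
  unfold sgn pull
  rw [dif_pos (σ i j).2]
  split_ifs <;> simp

lemma pull_net (G : Multigraph V E) (x : V) (σ : Fin 5 → (Fin 5 ≃ {e // G.Incident x e}))
    (D : BE G x → Bool) (i : Fin 5) (v : {v : V // v ≠ x}) :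
    G.outDeg (pull G x σ D i) v.1 - G.inDeg (pull G x σ D i) v.1 =
      (big G x σ).outDeg D (some (i, v)) - (big G x σ).inDeg D (some (i, v)) := by
  rw [net_eq, net_eq]
  apply Fintype.sum_of_injective (emb G x σ i) (emb_inj G x σ i)
  · rintro (q | p) hp
    · have hq : q.1 ≠ i := by
        intro hq
        apply hp
        refine ⟨q.2.1, ?_⟩
        simp only [emb, q.2.2, dif_neg, not_false_eq_true]
        rw [← hq]
      unfold contrib tail head
      cases D (.inl q) <;> simp [big, hq]
    · have h1 : p.1.1 ≠ i := by
        intro h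
        apply hp
        exact ⟨(σ i p.1.2).1, by rw [emb_inc, ← h, (ke_surj p).1]⟩
      have h2 : p.1.2 ≠ i := by
        intro h
        apply hp
        exact ⟨(σ i p.1.1).1, by rw [emb_inc, ← h, (ke_surj p).2]⟩
      have h3 : (big G x σ).fst (.inr p) ≠ some (i, v) := by simp [big, h1]
      have h4 : (big G x σ).snd (.inr p) ≠ some (i, v) := by
        simp only [big]
        split_ifs <;> simp [h2]
      unfold contrib tail head
      cases D (.inr p) <;> simp [h3, h4]
  · intro e
    by_cases hinc : G.Incident x e
    · obtain ⟨j, hj⟩ : ∃ j, σ i j = ⟨e, hinc⟩ := (σ i).surjective _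
      have hemb := emb_inc G x σ i j
      have hsg := sgn_pull G x σ D i j
      have hke := ke_ends G x σ i j
      rw [hj] at hemb hsg hke
      simp only at hemb hsg hke
      rw [hemb]
      have hL : G.contrib (pull G x σ D i) v.1 e =
          pm (leave G x D i j) * (if G.oth x e = v then 1 else 0) := by
        rw [← hsg]
        generalize pull G x σ D i = D'
        have hvx : x ≠ v.1 := v.2.symm
        unfold contrib tail head sgn oth pm
        by_cases hf : G.fst e = x
        · cases D' e <;> simp [hf, hvx, Subtype.ext_iff, apply_ite Neg.neg]
        · have hs : G.snd e = x := hinc.resolve_left hf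
          cases D' e <;> simp [hf, hs, hvx, Subtype.ext_iff, apply_ite Neg.neg]
      rw [hL]
      unfold contrib tail head leave pm
      rcases hke with ⟨hle, h1, h2⟩ | ⟨hle, h1, h2⟩
      · cases D (.inr (ke i j)) <;> simp [hle, h1, h2, apply_ite Neg.neg]
      · cases D (.inr (ke i j)) <;> simp [hle, h1, h2, apply_ite Neg.neg]
    · have : emb G x σ i e = .inl (i, ⟨e, hinc⟩) := by simp [emb, hinc]
      rw [this]
      have hp : pull G x σ D i e = D (.inl (i, ⟨e, hinc⟩)) := by simp [pull, hinc]
      unfold contrib tail head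
      rw [hp]
      cases D (.inl (i, ⟨e, hinc⟩)) <;> simp [big, Subtype.ext_iff]

lemma pull_mod3 (G : Multigraph V E) (x : V) (σ : Fin 5 → (Fin 5 ≃ {e // G.Incident x e}))
    (D : BE G x → Bool) (hD : (big G x σ).IsMod3Orientation D) (i : Fin 5) :
    G.IsMod3Orientation (pull G x σ D i) := by
  have h1 : ∀ v, v ≠ x → ((G.outDeg (pull G x σ D i) v - G.inDeg (pull G x σ D i) v : ℤ)
      : ZMod 3) = 0 := by
    intro v hv
    rw [pull_net G x σ D i ⟨v, hv⟩]
    exact hD _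
  intro v
  by_cases hv : v = x
  · subst hv
    have h2 := congrArg (fun z : ℤ => (z : ZMod 3)) (net_sum G (pull G v σ D i))
    simp only [Int.cast_sum, Int.cast_zero] at h2
    rwa [Finset.sum_eq_single v (fun w _ hw => h1 w hw) (by simp)] at h2
  · exact h1 v hv

end Construction

/-- If every 5-edge-connected graph admits a mod 3-orientation, then every
5-edge-connected graph is mod-3-extendable at every vertex of degree 5. -/
theorem stmt_13
    (hyp : ∀ (V E : Type) [Fintype V] [DecidableEq V] [Fintype E] [DecidableEq E] (G : Multigraph V E),
      G.EdgeConnected 5 → G.Mod3Orientable)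
    {V E : Type} [Fintype V] [DecidableEq V] [Fintype E] [DecidableEq E] (G : Multigraph V E) (x : V)
    (h5 : G.EdgeConnected 5) (hx : G.degree x = 5) :
    G.Mod3ExtendableAt x := by
  intro D₀ hD₀
  have hcard : Fintype.card (Fin 5) = Fintype.card {e // G.Incident x e} := by
    rw [Fintype.card_fin, Fintype.card_subtype]
    exact hx.symm
  let σ₀ : Fin 5 ≃ {e // G.Incident x e} := Fintype.equivOfCardEq hcard
  rw [net_x G x D₀ σ₀] at hD₀
  obtain ⟨j₀, hj₀⟩ := odd_one (fun j => G.sgn x D₀ (σ₀ j).1) hD₀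
  let σ : Fin 5 → (Fin 5 ≃ {e // G.Incident x e}) := fun i => (Equiv.swap i j₀).trans σ₀
  have hσ : ∀ i, σ i i = σ₀ j₀ := fun i => by simp [σ]
  obtain ⟨D, hD⟩ := hyp _ _ (big G x σ) (big_conn G x σ h5)
  have hp := pull_mod3 G x σ D hD
  obtain ⟨i, hi⟩ := tournament (leave G x D) (leave_anti G x D) (by
    intro i
    have := hp i x
    rw [net_x G x _ (σ i)] at this
    simpa only [sgn_pull] using this)
  have hodd : ∀ k, k ≠ i → G.sgn x D₀ (σ i k).1 = !G.sgn x D₀ (σ i i).1 := by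
    intro k hk
    rw [hσ i]
    have : σ i k = σ₀ (Equiv.swap i j₀ k) := rfl
    rw [this]
    apply hj₀
    intro h
    apply hk
    have h' := congrArg (Equiv.swap i j₀) h
    simpa using h'
  by_cases hc : leave G x D i i = G.sgn x D₀ (σ i i).1
  · refine ⟨pull G x σ D i, ?_, hp i⟩
    intro e he
    obtain ⟨j, hj⟩ : ∃ j, σ i j = ⟨e, he⟩ := (σ i).surjective _
    have h1 : G.sgn x (pull G x σ D i) (σ i j).1 = G.sgn x D₀ (σ i j).1 := by
      rw [sgn_pull]
      by_cases hji : j = i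
      · rw [hji, hc]
      · rw [hi j hji, hodd j hji, hc]
    rw [hj] at h1
    unfold sgn at h1
    split_ifs at h1 <;> simpa using h1
  · refine ⟨fun e => !pull G x σ D i e, ?_, ?_⟩
    · intro e he
      obtain ⟨j, hj⟩ : ∃ j, σ i j = ⟨e, he⟩ := (σ i).surjective _
      have hc' : leave G x D i i = !G.sgn x D₀ (σ i i).1 := by
        cases h1 : leave G x D i i <;> cases h2 : G.sgn x D₀ (σ i i).1 <;> simp_all
      have h1 : G.sgn x (pull G x σ D i) (σ i j).1 = !G.sgn x D₀ (σ i j).1 := by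
        rw [sgn_pull]
        by_cases hji : j = i
        · rw [hji, hc']
        · rw [hi j hji, hodd j hji, hc']
      rw [hj] at h1
      unfold sgn at h1
      split_ifs at h1 <;> simpa using congrArg (!·) h1
    · intro v
      have := hp i v
      rw [net_eq] at this ⊢
      simp only [contrib_not, Finset.sum_neg_distrib, Int.cast_neg, this, neg_zero]

end Multigraph
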